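/- arXiv:1104.3444 — 2 statements merged into one kernel-verified Lean document; each statement's English description precedes it below -/
import Mathlib

section
/- Let X be an n-element set with n ≥ 1. In the lattice Π_l(X) of labelled set partitions of X, μ_{Π_l(X)}(σ_n, 1̂_l) = (−1)^{n−1}(n−1)! and μ_{Π_l(X)}(0̂_l, 1̂_l) = (−1)^n (n−1)!, where σ_n is the partition of X into labelled singleton blocks, 0̂_l is the partition into unlabelled singleton blocks, and 1̂_l is the single labelled block X∪{l}. -/
open scoped Classical

noncomputable section

/-! ## Labelled set partitions -/

/-- A labelled set partition of a finite set `α`: a set partition of `α` (encoded as the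
equivalence relation `rel` whose classes are the blocks) in which each block either carries
the label `l` or not (a point `x` lies in `lab` iff the block of `x` is labelled). -/
@[ext]
structure LPart (α : Type*) where
  rel : Setoid α
  lab : Set α
  lab_mem : ∀ ⦃x y : α⦄, rel x y → (x ∈ lab ↔ y ∈ lab)

namespace LPart

variable {α : Type*}

/-- `σ ≤ π` iff every block of `σ` (together with its label) is contained in a block of `π`. -/
instance : PartialOrder (LPart α) where
  le σ π := σ.rel ≤ π.rel ∧ σ.lab ⊆ π.lab
  le_refl σ := ⟨le_rfl, subset_rfl⟩
  le_trans _ _ _ h h' := ⟨h.1.trans h'.1, h.2.trans h'.2⟩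
  le_antisymm σ π h h' := LPart.ext (le_antisymm h.1 h'.1) (le_antisymm h.2 h'.2)

/-- The join (smallest common coarsening) of two labelled set partitions: the join of the
underlying partitions, a block being labelled iff it contains a labelled block of one of the
two partitions. -/
def sup (σ π : LPart α) : LPart α where
  rel := σ.rel ⊔ π.rel
  lab := {x | ∃ y, (σ.rel ⊔ π.rel) x y ∧ (y ∈ σ.lab ∨ y ∈ π.lab)}
  lab_mem := by
    intro x y h
    constructor
    · rintro ⟨z, hz, hl⟩
      exact ⟨z, (σ.rel ⊔ π.rel).iseqv.trans ((σ.rel ⊔ π.rel).iseqv.symm h) hz, hl⟩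
    · rintro ⟨z, hz, hl⟩
      exact ⟨z, (σ.rel ⊔ π.rel).iseqv.trans h hz, hl⟩

instance _root_.Setoid.finite [Finite α] : Finite (Setoid α) :=
  Finite.of_injective (fun s : Setoid α => ⇑s) fun _ _ h => Setoid.eq_iff_rel_eq.2 h

instance [Finite α] : Finite (LPart α) :=
  Finite.of_injective (fun π : LPart α => (π.rel, π.lab))
    (fun a b h => by
      cases a; cases b
      simpa [LPart.mk.injEq] using h)

instance fintype [Finite α] : Fintype (LPart α) := Fintype.ofFinite _

/-- `π` has exactly one labelled block. -/
def OneLab (π : LPart α) : Prop :=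
  π.lab.Nonempty ∧ ∀ x ∈ π.lab, ∀ y ∈ π.lab, π.rel x y

/-- The indicator `m(π)` that `π` has exactly one labelled block. -/
def m (π : LPart α) : ℝ := if π.OneLab then 1 else 0

/-- The labelled set partition `π_X` into singleton blocks, the singleton `{x}` being
labelled iff `x ∈ K`. -/
def piX (K : Set α) : LPart α :=
  ⟨⊥, K, fun x y h => by
    have : x = y := by
      have := Setoid.bot_def (α := α)
      exact congrFun (congrFun this x) y ▸ h
    rw [this]⟩

end LPart

/-- The Möbius function of a finite poset (the unique `μ` with `μ ⋆ ζ = δ`),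
evaluated at a pair of elements. -/
def mobius {P : Type*} [Fintype P] [PartialOrder P] (x y : P) : ℝ :=
  letI : LocallyFiniteOrder P := Fintype.toLocallyFiniteOrder
  IncidenceAlgebra.mu ℝ x y

/-- The state set `Π_l(X, π_X)`: all labelled set partitions `π ≥ π_X` having at least one
labelled block. -/
abbrev LStates (α : Type*) (K : Set α) : Type _ :=
  {π : LPart α // LPart.piX K ≤ π ∧ π.lab.Nonempty}

noncomputable instance {α : Type*} [Finite α] (K : Set α) : Fintype (LStates α K) :=
  Fintype.ofFinite _

/-- `λ(π) = ∑_{σ ∈ Π_l(X,π_X), σ ≥ π} μ_{Π_l(X)}(π, σ) m(σ)`. -/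
def lamda {α : Type*} [Finite α] (K : Set α) (π : LPart α) : ℝ :=
  letI : Fintype (LPart α) := LPart.fintype
  ∑ σ : LStates α K, if π ≤ σ.1 then mobius π σ.1 * LPart.m σ.1 else 0

/-- The maximum `1̂_l` of `Π_l(X)`: the single labelled block `X ∪ {l}`. -/
def LPart.topL (α : Type*) : LPart α := ⟨⊤, Set.univ, fun _ _ _ => Iff.rfl⟩

/-- `σ_n`: the labelled set partition of `X` into labelled singleton blocks. -/
def LPart.sigmaN (α : Type*) : LPart α := LPart.piX Set.univ

/-- `0̂_l`: the labelled set partition of `X` into unlabelled singleton blocks,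
the minimum of `Π_l(X)`. -/
def LPart.botL (α : Type*) : LPart α := LPart.piX ∅

/-!
Both Möbius values are read off from the partition lattice. For fixed `ρ`, sorting the
`x ^ |X / ρ|` maps from `X` to `{1, …, x}` that are constant on the blocks of `ρ` by their kernels
gives the polynomial identity `x ^ |X / ρ| = ∑_{τ ≥ ρ} x (x - 1) ⋯ (x - |X / τ| + 1)`. Its
coefficients of `x` say that the linear coefficient `(-1) ^ (k - 1) (k - 1)!` of the falling
factorial of length `k = |X / τ|` satisfies the recursion that determines `μ(τ, 1̂)`.

The labelled case follows from `μ(π, 1̂_l) = ([all blocks labelled] - [none labelled]) μ(τ, 1̂)`,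
where `τ` is the partition underlying `π`. Summed over the elements above `π`, the first
term always contributes `[τ = 1̂]`; the second contributes the same amount if `π` has no labelled
block, and nothing otherwise. The difference is `[π = 1̂_l]`.
-/

section MobiusTop

variable {P : Type*} [Fintype P] [PartialOrder P] [OrderTop P]

theorem sum_mobius_top (x : P) : ∑ y with x ≤ y, mobius y ⊤ = if x = ⊤ then 1 else 0 := by
  let : LocallyFiniteOrder P := Fintype.toLocallyFiniteOrder
  rw [← IncidenceAlgebra.sum_Icc_mu_left (𝕜 := ℝ) x ⊤]
  exact Finset.sum_congr (by ext; simp) fun _ _ => rfl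

theorem mobius_top_eq_of_sum_eq {f : P → ℝ}
    (hf : ∀ x, ∑ y with x ≤ y, f y = if x = ⊤ then 1 else 0) (x : P) : mobius x ⊤ = f x := by
  let : LocallyFiniteOrder P := Fintype.toLocallyFiniteOrder
  have inversion := IncidenceAlgebra.moebius_inversion_top (𝕜 := ℝ) f
    (fun y => if y = ⊤ then 1 else 0)
    (fun y => (hf y).symm.trans (Finset.sum_congr (by ext; simp) fun _ _ => rfl)) x
  simpa [mobius] using inversion.symm

end MobiusTop

theorem descPochhammer_eval_neg_one (R : Type*) [Ring R] (n : ℕ) :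
    (descPochhammer R n).eval (-1) = (-1) ^ n * (n.factorial : R) := by
  have reflection := ascPochhammer_eval_neg_eq_descPochhammer R (-1) n
  rw [neg_neg, ascPochhammer_eval_one] at reflection
  rw [reflection, ← mul_assoc, ← pow_add, Even.neg_one_pow ⟨n, rfl⟩, one_mul]

theorem descPochhammer_succ_coeff_one (R : Type*) [CommRing R] (n : ℕ) :
    (descPochhammer R (n + 1)).coeff 1 = (-1) ^ n * (n.factorial : R) := by
  rw [descPochhammer_succ_left, Polynomial.coeff_X_mul, Polynomial.coeff_zero_eq_eval_zero,
    Polynomial.eval_comp]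
  simpa using descPochhammer_eval_neg_one R n

section PartitionLattice

variable {α : Type*}

/-- Maps with kernel exactly `τ` are the embeddings of the quotient by `τ`, which are counted by a
falling factorial. -/
def kerEqEquivEmbedding {β : Type*} (τ : Setoid α) :
    {f : α → β // Setoid.ker f = τ} ≃ (Quotient τ ↪ β) where
  toFun f := ⟨Quotient.lift f.1 f.2.ge, Setoid.lift_injective_iff_ker_eq_of_le f.2.ge |>.2 f.2⟩
  invFun g := ⟨fun a => g ⟦a⟧, by
    ext a b
    rw [Setoid.ker_def, g.injective.eq_iff]
    exact Quotient.eq⟩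
  left_inv _ := rfl
  right_inv g := by
    ext q
    induction q using Quotient.inductionOn
    rfl

theorem card_quotient_eq_one_iff [Nonempty α] (ρ : Setoid α) :
    Nat.card (Quotient ρ) = 1 ↔ ρ = ⊤ := by
  rw [Nat.card_eq_one_iff_unique, Quotient.subsingleton_iff]
  exact and_iff_left (Nonempty.map (Quotient.mk ρ) ‹_›)

variable [Finite α]

instance instFintypeSetoid : Fintype (Setoid α) := Fintype.ofFinite _

theorem card_ker_eq {β : Type*} [Finite β] (τ : Setoid α) :
    Nat.card {f : α → β // Setoid.ker f = τ} =
      (Nat.card β).descFactorial (Nat.card (Quotient τ)) := by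
  have := Fintype.ofFinite β
  have := Fintype.ofFinite (Quotient τ)
  rw [Nat.card_congr (kerEqEquivEmbedding τ)]
  simp only [Nat.card_eq_fintype_card, Fintype.card_embedding_eq]

theorem card_pow_card_quotient_eq_sum (β : Type*) [Finite β] (ρ : Setoid α) :
    Nat.card β ^ Nat.card (Quotient ρ) =
      ∑ τ : Setoid α with ρ ≤ τ, (Nat.card β).descFactorial (Nat.card (Quotient τ)) := by
  calc
    _ = Nat.card {f : α → β // ρ ≤ Setoid.ker f} := by
      rw [Nat.card_congr (Setoid.liftEquiv ρ), Nat.card_fun]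
    _ = Nat.card (Σ τ : {τ : Setoid α // ρ ≤ τ}, {f : α → β // Setoid.ker f = τ}) :=
      Nat.card_congr (Equiv.sigmaSubtypeFiberEquivSubtype Setoid.ker fun _ => Iff.rfl).symm
    _ = ∑ τ : {τ : Setoid α // ρ ≤ τ}, (Nat.card β).descFactorial (Nat.card (Quotient τ.1)) := by
      rw [Nat.card_sigma]
      exact Finset.sum_congr rfl fun τ _ => card_ker_eq τ.1
    _ = _ :=
      (Finset.sum_subtype {τ : Setoid α | ρ ≤ τ} Finset.mem_filter_univ
        fun τ => (Nat.card β).descFactorial (Nat.card (Quotient τ))).symm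

theorem X_pow_card_quotient_eq_sum (R : Type*) [CommRing R] [IsDomain R] [CharZero R]
    (ρ : Setoid α) :
    (Polynomial.X : Polynomial R) ^ Nat.card (Quotient ρ) =
      ∑ τ : Setoid α with ρ ≤ τ, descPochhammer R (Nat.card (Quotient τ)) := by
  refine Polynomial.eq_of_infinite_eval_eq _ _
    ((Set.infinite_range_of_injective (Nat.cast_injective (R := R))).mono ?_)
  rintro _ ⟨x, rfl⟩
  simp only [Set.mem_ofPred_eq, Polynomial.eval_pow, Polynomial.eval_X, Polynomial.eval_finsetSum,
    descPochhammer_eval_eq_descFactorial]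
  exact_mod_cast Nat.card_fin x ▸ card_pow_card_quotient_eq_sum (Fin x) ρ

theorem mobius_setoid_top [Nonempty α] (ρ : Setoid α) :
    mobius ρ ⊤ =
      (-1) ^ (Nat.card (Quotient ρ) - 1) * ((Nat.card (Quotient ρ) - 1).factorial : ℝ) := by
  have : Nonempty (Quotient ρ) := Nonempty.map (Quotient.mk ρ) ‹_›
  have linear_coeff (τ : Setoid α) :
      ∑ υ : Setoid α with τ ≤ υ, (descPochhammer ℝ (Nat.card (Quotient υ))).coeff 1 =
        if τ = ⊤ then 1 else 0 := by
    rw [← Polynomial.finsetSum_coeff, ← X_pow_card_quotient_eq_sum, Polynomial.coeff_X_pow]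
    simp only [eq_comm, card_quotient_eq_one_iff]
  rw [mobius_top_eq_of_sum_eq linear_coeff, ← descPochhammer_succ_coeff_one,
    Nat.sub_add_cancel Nat.card_pos]

end PartitionLattice

namespace LPart

variable {α : Type*}

instance : OrderTop (LPart α) where
  top := topL α
  le_top _ := ⟨le_top, Set.subset_univ _⟩

theorem eq_topL_iff [Nonempty α] {π : LPart α} :
    π = topL α ↔ π.rel = ⊤ ∧ π.lab.Nonempty := by
  refine ⟨?_, fun ⟨hrel, y, hy⟩ => LPart.ext hrel ?_⟩
  · rintro rfl
    exact ⟨rfl, Set.univ_nonempty⟩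
  · exact Set.eq_univ_of_forall fun x => (π.lab_mem (hrel ▸ trivial : π.rel x y)).2 hy

variable [Finite α]

/-- Only `∅` and `Set.univ` satisfy `hA`, which lets `A` label the blocks of every partition. -/
theorem sum_ge_ite_lab_eq {M : Type*} [AddCommMonoid M] (π : LPart α) {A : Set α}
    (hA : ∀ x y, x ∈ A ↔ y ∈ A) (g : Setoid α → M) :
    ∑ σ with π ≤ σ, (if σ.lab = A then g σ.rel else 0) =
      if π.lab ⊆ A then ∑ τ with π.rel ≤ τ, g τ else 0 := by
  rw [← Finset.sum_filter, Finset.filter_filter]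
  split_ifs with hπ
  · refine Finset.sum_bij' (fun σ _ => σ.rel) (fun τ _ => ⟨τ, A, fun x y _ => hA x y⟩)
      ?_ ?_ ?_ ?_ ?_
    · exact fun σ hσ => (Finset.mem_filter_univ _).2 ((Finset.mem_filter_univ σ).1 hσ).1.1
    · exact fun τ hτ => (Finset.mem_filter_univ _).2 ⟨⟨(Finset.mem_filter_univ τ).1 hτ, hπ⟩, rfl⟩
    · exact fun σ hσ => LPart.ext rfl ((Finset.mem_filter_univ σ).1 hσ).2.symm
    · exact fun _ _ => rfl
    · exact fun _ _ => rfl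
  · refine Finset.sum_eq_zero fun σ hσ => ?_
    obtain ⟨hle, rfl⟩ := (Finset.mem_filter_univ σ).1 hσ
    exact absurd hle.2 hπ

variable [Nonempty α]

theorem mobius_topL (π : LPart α) :
    mobius π (topL α) =
      (if π.lab = Set.univ then mobius π.rel ⊤ else 0) -
        (if π.lab = ∅ then mobius π.rel ⊤ else 0) := by
  refine mobius_top_eq_of_sum_eq (f := fun σ : LPart α =>
    (if σ.lab = Set.univ then mobius σ.rel ⊤ else 0) -
      (if σ.lab = ∅ then mobius σ.rel ⊤ else 0)) (fun σ => ?_) π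
  rw [Finset.sum_sub_distrib, sum_ge_ite_lab_eq σ (fun _ _ => Iff.rfl) (mobius · ⊤),
    sum_ge_ite_lab_eq σ (fun _ _ => Iff.rfl) (mobius · ⊤), if_pos (Set.subset_univ _),
    sum_mobius_top, Set.subset_empty_iff]
  change _ = if σ = topL α then _ else _
  simp only [eq_topL_iff, Set.nonempty_iff_ne_empty]
  split_ifs <;> simp_all

theorem mobius_topL_of_lab_eq_univ {π : LPart α} (hπ : π.lab = Set.univ) :
    mobius π (topL α) = mobius π.rel ⊤ := by
  rw [mobius_topL, if_pos hπ, if_neg (hπ ▸ Set.univ_nonempty.ne_empty), sub_zero]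

theorem mobius_topL_of_lab_eq_empty {π : LPart α} (hπ : π.lab = ∅) :
    mobius π (topL α) = -mobius π.rel ⊤ := by
  rw [mobius_topL, if_neg (hπ ▸ Set.empty_ne_univ), if_pos hπ, zero_sub]

end LPart

/-- In the lattice `Π_l(X)` of labelled set partitions of an `n`-element set `X` (`n ≥ 1`),
`μ(σ_n, 1̂_l) = (-1)^(n-1) (n-1)!` and `μ(0̂_l, 1̂_l) = (-1)^n (n-1)!`. -/
theorem mobius_labelled_partition_lattice {α : Type*} [Fintype α] [Nonempty α] :
    mobius (LPart.sigmaN α) (LPart.topL α) =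
        (-1) ^ (Fintype.card α - 1) * (Nat.factorial (Fintype.card α - 1) : ℝ) ∧
      mobius (LPart.botL α) (LPart.topL α) =
        (-1) ^ (Fintype.card α) * (Nat.factorial (Fintype.card α - 1) : ℝ) := by
  have mobius_bot_top : mobius (⊥ : Setoid α) ⊤ =
      (-1) ^ (Fintype.card α - 1) * (Nat.factorial (Fintype.card α - 1) : ℝ) := by
    rw [mobius_setoid_top, Nat.card_congr Setoid.quotientBotEquiv, Nat.card_eq_fintype_card]
  constructor
  · rw [LPart.mobius_topL_of_lab_eq_univ rfl]
    exact mobius_bot_top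
  · rw [LPart.mobius_topL_of_lab_eq_empty rfl, ← mul_pow_sub_one Fintype.card_ne_zero, neg_one_mul,
      neg_mul]
    exact congrArg Neg.neg mobius_bot_top

end
end

section
/- Let P be a finite upper semilattice, g : P → ℝ, and define f : P → ℝ by f(p) = ∑_{q ∈ P, q ≥ p} g(q). Let P₀ = {p ∈ P : g(p) ≠ 0} and let F₀ be the matrix indexed by P₀ × P₀ with entries (F₀)_{xy} = f(x ∨ y). Then F₀ is invertible. -/
open scoped Classical

/-!
Restricting the order of `P` to `P₀`, let `Z` be its zeta matrix, `Z a q = 1` if `a ≤ q` and `0`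
otherwise. Since `a ⊔ b ≤ q` exactly when `a ≤ q` and `b ≤ q`, and only the `q ∈ P₀` contribute
to `f`, we have `F₀ = Z D Zᵀ` with `D` the diagonal matrix of the values of `g` on `P₀`. The matrix
`Z` is invertible by Möbius inversion, and `D` because its diagonal entries are units.
-/

open Matrix

section ZetaMatrix

/-- The ring homomorphism from the incidence algebra of a finite order to the full matrix ring,
taking `f` to the matrix with entries `f a b`. -/
def incidenceAlgebraToMatrix (R Q : Type*) [NonAssocSemiring R] [Preorder Q] [LocallyFiniteOrder Q]
    [Fintype Q] [DecidableEq Q] : IncidenceAlgebra R Q →+* Matrix Q Q R where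
  toFun f := of f
  map_zero' := rfl
  map_one' := by
    ext a b
    simp [one_apply]
  map_add' _ _ := rfl
  map_mul' f g := by
    ext a b
    simp only [of_apply, IncidenceAlgebra.mul_apply, mul_apply]
    refine Finset.sum_subset (Finset.subset_univ _) fun q _ hq ↦ ?_
    rw [Finset.mem_Icc, not_and_or] at hq
    obtain haq | hqb := hq
    · rw [IncidenceAlgebra.apply_eq_zero_of_not_le haq, zero_mul]
    · rw [IncidenceAlgebra.apply_eq_zero_of_not_le hqb, mul_zero]

theorem isUnit_incidenceAlgebra_zeta (R Q : Type*) [Ring R] [PartialOrder Q]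
    [LocallyFiniteOrder Q] [DecidableEq Q] [DecidableLE Q] :
    IsUnit (IncidenceAlgebra.zeta R : IncidenceAlgebra R Q) :=
  ⟨⟨_, IncidenceAlgebra.mu R, IncidenceAlgebra.zeta_mul_mu, IncidenceAlgebra.mu_mul_zeta R Q⟩, rfl⟩

/-- The zeta matrix of an order: the `0`-`1` matrix of the relation `≤`, whose rows are indexed by
the smaller element. -/
def zetaMatrix (R Q : Type*) [Zero R] [One R] [LE Q] [DecidableLE Q] : Matrix Q Q R :=
  of fun a b ↦ if a ≤ b then 1 else 0

variable (R Q : Type*) [Ring R] [PartialOrder Q] [Fintype Q] [DecidableEq Q] [DecidableLE Q]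

theorem isUnit_zetaMatrix : IsUnit (zetaMatrix R Q) :=
  letI : LocallyFiniteOrder Q := Fintype.toLocallyFiniteOrder
  (isUnit_incidenceAlgebra_zeta R Q).map (incidenceAlgebraToMatrix R Q)

-- The transpose is the zeta matrix of the dual order, so no determinant is needed and `R` may be
-- noncommutative.
theorem isUnit_transpose_zetaMatrix : IsUnit (zetaMatrix R Q)ᵀ :=
  isUnit_zetaMatrix R Qᵒᵈ

end ZetaMatrix

theorem isUnit_diagonal_of_forall_isUnit {n R : Type*} [Semiring R] [Fintype n] [DecidableEq n]
    {d : n → R} (hd : ∀ i, IsUnit (d i)) : IsUnit (diagonal d) :=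
  (Pi.isUnit_iff.2 hd).map (diagonalRingHom n R)

section JoinMatrix

variable {P R : Type*} [SemilatticeSup P]

/-- The join matrix of `f` on the subset `p` of an upper semilattice, with entries `f (a ⊔ b)`. The
subset need not be closed under joins, so `f` is defined on the whole semilattice. -/
def joinMatrix (p : P → Prop) (f : P → R) : Matrix (Subtype p) (Subtype p) R :=
  of fun a b ↦ f (a ⊔ b)

variable {p : P → Prop} [DecidableLE P] [Fintype (Subtype p)] [DecidableEq (Subtype p)]

theorem joinMatrix_sum_eq_zetaMatrix_mul_diagonal_mul [NonAssocSemiring R] (g : Subtype p → R) :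
    joinMatrix p (fun x ↦ ∑ q : Subtype p, if x ≤ q then g q else 0) =
      zetaMatrix R (Subtype p) * diagonal g * (zetaMatrix R (Subtype p))ᵀ := by
  ext a b
  rw [joinMatrix, of_apply, mul_apply]
  refine Finset.sum_congr rfl fun q _ ↦ ?_
  simp only [mul_diagonal, transpose_apply, zetaMatrix, of_apply, sup_le_iff, Subtype.coe_le_coe,
    ite_and, boole_mul, mul_boole]
  split_ifs <;> rfl

theorem isUnit_joinMatrix_sum [Ring R] {g : Subtype p → R} (hg : ∀ q, IsUnit (g q)) :
    IsUnit (joinMatrix p fun x ↦ ∑ q : Subtype p, if x ≤ q then g q else 0) := by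
  rw [joinMatrix_sum_eq_zetaMatrix_mul_diagonal_mul]
  exact ((isUnit_zetaMatrix R _).mul (isUnit_diagonal_of_forall_isUnit hg)).mul
    (isUnit_transpose_zetaMatrix R _)

end JoinMatrix

theorem finsum_eq_sum_subtype {α M : Type*} [AddCommMonoid M] {f : α → M} {p : α → Prop}
    [Fintype (Subtype p)] (h : ∀ x, f x ≠ 0 → p x) : ∑ᶠ x, f x = ∑ x : Subtype p, f x := by
  rw [finsum_eq_sum_of_support_subset f (s := Finset.univ.map (.subtype p))
    fun x hx ↦ by simpa using h x hx, Finset.sum_map]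
  rfl

theorem wilf_restricted_invertible_general {P R : Type*} [SemilatticeSup P] [DecidableLE P]
    [Ring R] (g f : P → R) [Fintype {x : P // g x ≠ 0}] [DecidableEq {x : P // g x ≠ 0}]
    (hg : ∀ x, g x ≠ 0 → IsUnit (g x)) (hf : ∀ x, f x = ∑ᶠ y, if x ≤ y then g y else 0)
    (F0 : Matrix {x : P // g x ≠ 0} {x : P // g x ≠ 0} R)
    (hF0 : ∀ a b, F0 a b = f (a.1 ⊔ b.1)) :
    IsUnit F0 := by
  have f_eq_sum : f = fun x : P ↦ ∑ q : {y : P // g y ≠ 0}, if x ≤ q then g q else 0 := by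
    funext x
    rw [hf]
    exact finsum_eq_sum_subtype fun y hy hgy ↦ hy (by rw [hgy, ite_self])
  have F0_eq : F0 = joinMatrix (g · ≠ 0) f := ext hF0
  rw [F0_eq, f_eq_sum]
  exact isUnit_joinMatrix_sum fun q ↦ hg q q.2

/-- Let `P` be a finite upper semilattice, `g : P → ℝ`, and `f p = ∑_{q ≥ p} g q`.
Let `P₀ = {p : P // g p ≠ 0}` and let `F₀` be the `P₀ × P₀` matrix with entries
`f (x ⊔ y)`.  Then `F₀` is invertible. -/
theorem wilf_restricted_invertible {P : Type*} [Fintype P] [SemilatticeSup P]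
    (g f : P → ℝ) (hf : ∀ x : P, f x = ∑ y : P, if x ≤ y then g y else 0)
    (F0 : Matrix {x : P // g x ≠ 0} {x : P // g x ≠ 0} ℝ)
    (hF0 : ∀ a b, F0 a b = f (a.1 ⊔ b.1)) :
    IsUnit F0 :=
  wilf_restricted_invertible_general g f (fun _ ↦ IsUnit.mk0 _)
    (fun x ↦ (hf x).trans (finsum_eq_sum_of_fintype _).symm) F0 hF0
end
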